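/- arXiv:math/0205029 — 6 statements merged into one kernel-verified Lean document; each statement's English description precedes it below -/
import Mathlib

section
/- Let G be a group, let Γ be a simple graph on the vertex set {1,…,n} which is a forest, and let t₁,…,tₙ ∈ G be elements such that tᵢ and tⱼ commute whenever i ≠ j and the vertices i and j are not adjacent in Γ. Then for every permutation π of {1,…,n} there exists an element f of the subgroup of G generated by t₁,…,tₙ such that T_π = f · T_id · f⁻¹, where T_σ denotes the ordered product t_{σ(n)} · t_{σ(n−1)} · ⋯ · t_{σ(1)}. -/
/-!
Cyclically rotating a product is a conjugation, so a leaf `v` of the forest can be moved to the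
front of both products. Its factor `t v` commutes with every other factor except that of its
neighbour `u`, so it slides up to `t u` and merges with it into `t v * t u`. The new elements
commute according to the forest with `v` removed, and induction on the number of factors applies.
Running the argument inside the subgroup generated by the `t i` puts the conjugating element there.
-/

open Function
open scoped List

section Forest

variable {V : Type*} {Γ : SimpleGraph V}

-- Completing the forest to a tree treats an isolated vertex and a leaf alike.
theorem exists_ne_forall_adj_eq_of_isAcyclic [Finite V] [Nontrivial V] (hΓ : Γ.IsAcyclic) :
    ∃ v u, u ≠ v ∧ ∀ w, Γ.Adj v w → w = u := by
  classical
  have := Fintype.ofFinite V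
  obtain ⟨T, hΓT, -, hT⟩ :=
    SimpleGraph.connected_top.exists_isTree_le_of_le_of_isAcyclic le_top hΓ
  obtain ⟨v, hv⟩ := hT.exists_vert_degree_one_of_nontrivial
  obtain ⟨u, hvu, hu⟩ := SimpleGraph.degree_eq_one_iff_existsUnique_adj.mp hv
  exact ⟨v, u, hvu.ne', fun w hvw ↦ hu w (hΓT hvw)⟩

theorem exists_mem_ne_forall_adj_eq_of_isAcyclic (hΓ : Γ.IsAcyclic) {s : Set V}
    (hfin : s.Finite) (hs : s.Nontrivial) :
    ∃ v ∈ s, ∃ u ∈ s, u ≠ v ∧ ∀ w ∈ s, Γ.Adj v w → w = u := by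
  have := hfin.to_subtype
  have := hs.coe_sort
  obtain ⟨v, u, huv, hleaf⟩ := exists_ne_forall_adj_eq_of_isAcyclic (hΓ.induce s)
  exact ⟨v, v.2, u, u.2, Subtype.coe_ne_coe.mpr huv,
    fun w hw hvw ↦ congrArg Subtype.val (hleaf ⟨w, hw⟩ hvw)⟩

end Forest

section Merge

variable {ι M : Type*} [DecidableEq ι] {t : ι → M} {u : ι} {a : M}

theorem prod_map_update_mul [Monoid M] {l : List ι} (hl : l.Nodup) (hu : u ∈ l)
    (ha : ∀ i ∈ l, i ≠ u → Commute a (t i)) :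
    (l.map (update t u (a * t u))).prod = a * (l.map t).prod := by
  obtain ⟨x, y, rfl⟩ := List.append_of_mem hu
  obtain ⟨hux, huy⟩ : u ∉ x ∧ u ∉ y := by
    simpa only [List.mem_append, not_or] using (List.nodup_middle.mp hl).notMem
  have hmap {z : List ι} (hz : u ∉ z) : z.map (update t u (a * t u)) = z.map t :=
    List.map_congr_left fun i hi ↦ update_of_ne (ne_of_mem_of_not_mem hi hz) _ _
  have hax : Commute a (x.map t).prod := by
    refine Commute.list_prod_right _ _ fun _ hb ↦ ?_
    obtain ⟨i, hi, rfl⟩ := List.mem_map.mp hb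
    exact ha i (List.mem_append_left _ hi) (ne_of_mem_of_not_mem hi hux)
  simp only [List.map_append, List.map_cons, List.prod_append, List.prod_cons, hmap hux,
    hmap huy, update_self, ← mul_assoc, hax.eq]

theorem pairwise_commute_update_mul [Semigroup M] {s : Set ι} {r : ι → ι → Prop}
    (hs : s.Pairwise fun i j ↦ r i j → Commute (t i) (t j))
    (ha : ∀ i ∈ s, i ≠ u → Commute a (t i)) :
    s.Pairwise fun i j ↦
      r i j → Commute (update t u (a * t u) i) (update t u (a * t u) j) := by
  intro i hi j hj hij hr
  have htij := hs hi hj hij hr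
  obtain rfl | hiu := eq_or_ne i u
  · simpa only [update_self, update_of_ne hij.symm] using (ha j hj hij.symm).mul_left htij
  obtain rfl | hju := eq_or_ne j u
  · simpa only [update_self, update_of_ne hij] using (ha i hi hij).symm.mul_right htij
  · simpa only [update_of_ne hiu, update_of_ne hju] using htij

end Merge

section Conjugacy

variable {V G : Type*} [Group G]

theorem isConj_prod_of_isRotated {l m : List G} (h : l ~r m) : IsConj l.prod m.prod := by
  obtain ⟨k, hk, rfl⟩ := List.isRotated_iff_mod.mp h
  rw [List.rotate_eq_drop_append_take hk, List.prod_append, isConj_iff]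
  refine ⟨(l.take k).prod⁻¹, ?_⟩
  rw [← List.prod_take_mul_prod_drop l k]
  group

theorem nontrivial_setOf_mem_of_nodup {l : List V} (hl : l.Nodup) (hlength : 1 < l.length) :
    {v | v ∈ l}.Nontrivial := by
  classical
  rw [← List.toFinset_card_of_nodup hl] at hlength
  simpa only [Finset.Nontrivial, List.coe_toFinset] using
    Finset.one_lt_card_iff_nontrivial.mp hlength

theorem exists_isRotated_cons_of_mem {v : V} {l : List V} (hv : v ∈ l) :
    ∃ m, l ~r v :: m := by
  obtain ⟨x, y, rfl⟩ := List.append_of_mem hv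
  exact ⟨y ++ x, List.isRotated_append⟩

theorem isConj_prod_map_of_perm {Γ : SimpleGraph V} (hΓ : Γ.IsAcyclic) (t : V → G)
    {l m : List V} (hl : l.Nodup) (hlm : l ~ m)
    (hcomm : {v | v ∈ l}.Pairwise fun v w ↦ ¬Γ.Adj v w → Commute (t v) (t w)) :
    IsConj (l.map t).prod (m.map t).prod := by
  classical
  induction hn : l.length generalizing t l m with
  | zero =>
    obtain rfl := List.length_eq_zero_iff.mp hn
    rw [List.nil_perm.mp hlm]
  | succ n ih =>
    obtain rfl | hn0 := Nat.eq_zero_or_pos n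
    · obtain ⟨v, rfl⟩ := List.length_eq_one_iff.mp hn
      rw [List.singleton_perm.mp hlm]
    obtain ⟨v, hv, u, hu, huv, hleaf⟩ :=
      exists_mem_ne_forall_adj_eq_of_isAcyclic hΓ l.finite_toSet
        (nontrivial_setOf_mem_of_nodup hl (by lia))
    obtain ⟨l', hl'⟩ := exists_isRotated_cons_of_mem hv
    obtain ⟨m', hm'⟩ := exists_isRotated_cons_of_mem (hlm.subset hv)
    have hlm' : l' ~ m' := (hl'.perm.symm.trans (hlm.trans hm'.perm)).cons_inv
    obtain ⟨hvl', hnodup⟩ := List.nodup_cons.mp (hl'.perm.nodup hl)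
    have hsub : l' ⊆ l := fun w hw ↦ hl'.perm.symm.subset (List.mem_cons_of_mem v hw)
    have hul' : u ∈ l' := List.mem_of_ne_of_mem huv (hl'.perm.subset hu)
    have hvcomm : ∀ w ∈ l', w ≠ u → Commute (t v) (t w) := fun w hw hwu ↦
      hcomm hv (hsub hw) (ne_of_mem_of_not_mem hw hvl').symm
        fun hvw ↦ hwu (hleaf w (hsub hw) hvw)
    have hmerged := ih (update t u (t v * t u)) hnodup hlm'
      (pairwise_commute_update_mul (hcomm.mono hsub) hvcomm)
      (Nat.succ.inj (hl'.perm.length_eq.symm.trans hn))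
    rw [prod_map_update_mul hnodup hul' hvcomm,
      prod_map_update_mul (hlm'.nodup hnodup) (hlm'.subset hul')
        fun w hw ↦ hvcomm w (hlm'.symm.subset hw)] at hmerged
    exact (isConj_prod_of_isRotated (hl'.map t)).trans
      (hmerged.trans (isConj_prod_of_isRotated (hm'.map t)).symm)

theorem stmt_0_general {Γ : SimpleGraph V} (hΓ : Γ.IsAcyclic) (t : V → G)
    {l m : List V} (hl : l.Nodup) (hlm : l ~ m)
    (hcomm : {v | v ∈ l}.Pairwise fun v w ↦ ¬Γ.Adj v w → Commute (t v) (t w)) :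
    ∃ f ∈ Subgroup.closure (Set.range t), (m.map t).prod = f * (l.map t).prod * f⁻¹ := by
  let s (v : V) : Subgroup.closure (Set.range t) :=
    ⟨t v, Subgroup.subset_closure (Set.mem_range_self v)⟩
  have hs (k : List V) : ((k.map s).prod : G) = (k.map t).prod := by
    rw [Subgroup.val_list_prod, List.map_map]
    rfl
  have hconj : IsConj (l.map s).prod (m.map s).prod :=
    isConj_prod_map_of_perm hΓ s hl hlm fun v hv w hw hvw hadj ↦
      Subtype.ext (hcomm hv hw hvw hadj)
  obtain ⟨f, hf⟩ := isConj_iff.mp hconj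
  refine ⟨f, f.2, ?_⟩
  rw [← hs m, ← hf, ← hs l]
  rfl

end Conjugacy

/-- Group-theoretic content of the paper's Lemma: if the "intersection graph" of
the generators `t i` is a forest (non-adjacent distinct generators commute), then
the ordered product `t (π (n-1)) * ⋯ * t (π 0)` is conjugate to
`t (n-1) * ⋯ * t 0` by an element of the subgroup generated by the `t i`. -/
theorem stmt_0 {G : Type*} [Group G] {n : ℕ} (Γ : SimpleGraph (Fin n))
    (hΓ : Γ.IsAcyclic) (t : Fin n → G)
    (hcomm : ∀ i j : Fin n, i ≠ j → ¬ Γ.Adj i j → Commute (t i) (t j))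
    (π : Equiv.Perm (Fin n)) :
    ∃ f ∈ Subgroup.closure (Set.range t),
      ((List.finRange n).reverse.map (fun i => t (π i))).prod =
        f * ((List.finRange n).reverse.map t).prod * f⁻¹ := by
  have hperm : (List.finRange n).reverse ~ (List.finRange n).reverse.map π :=
    (List.reverse_perm _).trans <|
      π.map_finRange_perm.symm.trans ((List.reverse_perm _).symm.map π)
  simpa only [List.map_map, comp_def] using stmt_0_general hΓ t
    (List.nodup_reverse.mpr (List.nodup_finRange n)) hperm fun i _ j _ ↦ hcomm i j
end

section
/- Let Γ be a forest with vertex set V of cardinality n ≥ 1. An arrangement of V around a circle with n positions is a bijection c : ℤ/nℤ → V. An elementary move replaces an arrangement c by the arrangement obtained from c by interchanging the labels at two cyclically consecutive positions p and p+1, and is allowed only if the labels c(p) and c(p+1) are not adjacent in Γ. Then for any two arrangements c and c′ there is a finite sequence of elementary moves carrying c to a rotation of c′, i.e., to an arrangement of the form q ↦ c′(q + r) for some r ∈ ℤ/nℤ. -/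
/-!
It suffices to interchange any two cyclically consecutive labels `x`, `y`, up to rotation. When they
are adjacent in the forest, deleting the bridge `xy` separates the vertices into a side `S` of `x`
and the other side, and every vertex of `S` other than `x` commutes with all of the other side, as
does every vertex of the other side other than `y` with all of `S`. Sorting the remaining labels
into those in `S`, forming a block `a`, and those not in `S`, forming a block `b`, one gets
`a b x y ~ a x b y ~ x b y a ~ x a b y ~ a b y x`: first `b` passes `x`, then `a` passes `b y`, and
the two other steps are rotations.
-/

namespace CircularArrangement

open Relation

section Words

variable {V : Type*} {Γ : SimpleGraph V}

/-- A step between words read around a circle: the interchange of two leading letters that are not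
adjacent in `Γ`, or a rotation. Since all rotations are steps, an interchange at any other pair of
cyclically consecutive places is a composite of steps. -/
inductive CircularStep (Γ : SimpleGraph V) : List V → List V → Prop
  | swap {x y : V} (hxy : ¬ Γ.Adj x y) (w : List V) : CircularStep Γ (x :: y :: w) (y :: x :: w)
  | rotate (u v : List V) : CircularStep Γ (u ++ v) (v ++ u)

/-- Equivalence of words read around a circle, up to rotation and interchanges of consecutive
letters that are not adjacent in `Γ`. The steps are reversible, so this is an equivalence
relation. -/
abbrev CircularEquiv (Γ : SimpleGraph V) : List V → List V → Prop :=
  ReflTransGen (CircularStep Γ)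

theorem CircularStep.symm {u v : List V} (h : CircularStep Γ u v) : CircularStep Γ v u := by
  cases h with
  | swap hxy w => exact .swap (fun hyx => hxy hyx.symm) w
  | rotate u v => exact .rotate v u

theorem CircularEquiv.symm {u v : List V} (h : CircularEquiv Γ u v) : CircularEquiv Γ v u :=
  have : Std.Symm (CircularStep Γ) := ⟨fun _ _ => CircularStep.symm⟩
  symm_of (CircularEquiv Γ) h

theorem circularEquiv_append_comm (u v : List V) : CircularEquiv Γ (u ++ v) (v ++ u) :=
  .single (.rotate u v)

theorem circularEquiv_letter_append_comm {x : V} {v : List V} (h : ∀ y ∈ v, ¬ Γ.Adj x y)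
    (w : List V) : CircularEquiv Γ (x :: (v ++ w)) (v ++ x :: w) := by
  induction v generalizing w with
  | nil => exact .refl
  | cons y v ih =>
    calc
      CircularEquiv Γ (x :: y :: (v ++ w)) (y :: x :: (v ++ w)) :=
        .single (.swap (h y List.mem_cons_self) _)
      CircularEquiv Γ _ (x :: (v ++ (w ++ [y]))) := by
        simpa using circularEquiv_append_comm [y] (x :: (v ++ w))
      CircularEquiv Γ _ (v ++ x :: (w ++ [y])) :=
        ih (fun z hz => h z (List.mem_cons_of_mem y hz)) _
      CircularEquiv Γ _ (y :: v ++ x :: w) := by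
        simpa using circularEquiv_append_comm (v ++ x :: w) [y]

theorem circularEquiv_block_append_comm {u v : List V} (h : ∀ x ∈ u, ∀ y ∈ v, ¬ Γ.Adj x y)
    (w : List V) : CircularEquiv Γ (u ++ v ++ w) (v ++ u ++ w) := by
  induction u generalizing w with
  | nil => simpa using ReflTransGen.refl
  | cons x u ih =>
    calc
      CircularEquiv Γ (x :: u ++ v ++ w) (u ++ v ++ (w ++ [x])) := by
        simpa using circularEquiv_append_comm [x] (u ++ v ++ w)
      CircularEquiv Γ _ (v ++ u ++ (w ++ [x])) :=
        ih (fun z hz => h z (List.mem_cons_of_mem x hz)) _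
      CircularEquiv Γ _ (x :: (v ++ (u ++ w))) := by
        simpa using circularEquiv_append_comm (v ++ u ++ w) [x]
      CircularEquiv Γ _ (v ++ x :: u ++ w) := by
        simpa using circularEquiv_letter_append_comm (h x List.mem_cons_self) (u ++ w)

theorem circularEquiv_filter_append_filter_not (p : V → Bool) {u : List V}
    (h : ∀ x ∈ u, ∀ y ∈ u, p x → ¬ p y → ¬ Γ.Adj x y) (w : List V) :
    CircularEquiv Γ (u ++ w) (u.filter p ++ u.filter (!p ·) ++ w) := by
  induction u generalizing w with
  | nil => exact .refl
  | cons x u ih =>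
    have to_front : CircularEquiv Γ (x :: u ++ w)
        (x :: (u.filter p ++ u.filter (!p ·) ++ w)) :=
      calc
        CircularEquiv Γ (x :: u ++ w) (u ++ (w ++ [x])) := by
          simpa using circularEquiv_append_comm [x] (u ++ w)
        CircularEquiv Γ _ (u.filter p ++ u.filter (!p ·) ++ (w ++ [x])) :=
          ih (fun y hy z hz => h y (List.mem_cons_of_mem x hy) z (List.mem_cons_of_mem x hz)) _
        CircularEquiv Γ _ (x :: (u.filter p ++ u.filter (!p ·) ++ w)) := by
          simpa using circularEquiv_append_comm (u.filter p ++ u.filter (!p ·) ++ w) [x]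
    by_cases hx : p x
    · simpa [hx] using to_front
    · have x_comm : ∀ y ∈ u.filter p, ¬ Γ.Adj x y := fun y hy hxy =>
        h y (List.mem_cons_of_mem x (List.mem_of_mem_filter hy)) x List.mem_cons_self
          (List.of_mem_filter hy) hx hxy.symm
      simpa [hx] using to_front.trans
        (by simpa using circularEquiv_letter_append_comm x_comm (u.filter (!p ·) ++ w))

theorem circularEquiv_swap_of_cut {S : Set V} {x y : V} (hx : x ∈ S) (hy : y ∉ S)
    (hS : ∀ a ∈ S, ∀ b ∉ S, Γ.Adj a b → a = x ∧ b = y) {w : List V} (hxw : x ∉ w) (hyw : y ∉ w) :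
    CircularEquiv Γ (x :: y :: w) (y :: x :: w) := by
  classical
  set a := w.filter (· ∈ S) with ha
  set b := w.filter fun z => !decide (z ∈ S) with hb
  have sort (t : List V) : CircularEquiv Γ (w ++ t) (a ++ b ++ t) :=
    circularEquiv_filter_append_filter_not (· ∈ S)
      (fun u hu v _ huS hvS huv =>
        hxw ((hS u (by simpa using huS) v (by simpa using hvS) huv).1 ▸ hu)) t
  have b_comm : ∀ v ∈ b, ∀ u ∈ [x], ¬ Γ.Adj v u := by
    simp only [hb, List.mem_filter, Bool.not_eq_true', decide_eq_false_iff_not, List.mem_singleton]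
    rintro v ⟨hvw, hvS⟩ u rfl hvu
    exact hyw ((hS u hx v hvS hvu.symm).2 ▸ hvw)
  have a_comm : ∀ u ∈ a, ∀ v ∈ b ++ [y], ¬ Γ.Adj u v := by
    intro u hu v hv huv
    obtain ⟨huw, huS⟩ : u ∈ w ∧ u ∈ S := by simpa [ha] using hu
    have hvS : v ∉ S := by
      rcases List.mem_append.1 hv with hv | hv
      · exact (by simpa [hb] using hv : v ∈ w ∧ v ∉ S).2
      · exact List.mem_singleton.1 hv ▸ hy
    exact hxw ((hS u huS v hvS huv).1 ▸ huw)
  calc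
    CircularEquiv Γ (x :: y :: w) (w ++ [x, y]) := circularEquiv_append_comm [x, y] w
    CircularEquiv Γ _ (a ++ b ++ [x, y]) := sort _
    CircularEquiv Γ _ (b ++ [x] ++ ([y] ++ a)) := by
      simpa using circularEquiv_append_comm a (b ++ [x, y])
    CircularEquiv Γ _ ([x] ++ b ++ ([y] ++ a)) := circularEquiv_block_append_comm b_comm _
    CircularEquiv Γ _ (a ++ [x] ++ b ++ [y]) := by
      simpa using circularEquiv_append_comm ([x] ++ b ++ [y]) a
    CircularEquiv Γ _ (b ++ [y] ++ a ++ [x]) := by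
      simpa using circularEquiv_append_comm (a ++ [x]) (b ++ [y])
    CircularEquiv Γ _ (a ++ (b ++ [y]) ++ [x]) :=
      (circularEquiv_block_append_comm a_comm _).symm
    CircularEquiv Γ _ (w ++ [y, x]) := by simpa using (sort [y, x]).symm
    CircularEquiv Γ _ (y :: x :: w) := circularEquiv_append_comm w [y, x]

theorem exists_cut_of_isBridge {x y : V} (h : Γ.IsBridge s(x, y)) :
    ∃ S : Set V, x ∈ S ∧ y ∉ S ∧ ∀ a ∈ S, ∀ b ∉ S, Γ.Adj a b → a = x ∧ b = y := by
  refine ⟨{z | (Γ.deleteEdges {s(x, y)}).Reachable x z}, .refl x, h, fun a ha b hb hab => ?_⟩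
  by_contra hne
  have deleted : s(a, b) = s(x, y) := by
    by_contra hne'
    exact hb (ha.trans (SimpleGraph.Adj.reachable (by simpa [hab] using hne')))
  rcases Sym2.eq_iff.1 deleted with hxy | ⟨rfl, rfl⟩
  · exact hne hxy
  · exact h ha

theorem circularEquiv_swap (hΓ : Γ.IsAcyclic) {x y : V} {w : List V} (hxw : x ∉ w) (hyw : y ∉ w) :
    CircularEquiv Γ (x :: y :: w) (y :: x :: w) := by
  by_cases hxy : Γ.Adj x y
  · obtain ⟨S, hx, hy, hS⟩ :=
      exists_cut_of_isBridge (SimpleGraph.isAcyclic_iff_forall_adj_isBridge.1 hΓ hxy)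
    exact circularEquiv_swap_of_cut hx hy hS hxw hyw
  · exact .single (.swap hxy w)

theorem circularEquiv_append_right_of_perm (hΓ : Γ.IsAcyclic) {u v : List V} (huv : u.Perm v)
    {w : List V} (hnd : (u ++ w).Nodup) : CircularEquiv Γ (u ++ w) (v ++ w) := by
  induction huv generalizing w with
  | nil => exact .refl
  | @cons x u v _ ih =>
    have hnd' : (u ++ (w ++ [x])).Nodup := by
      simpa using (List.perm_append_singleton x (u ++ w)).nodup_iff.2 hnd
    calc
      CircularEquiv Γ (x :: u ++ w) (u ++ (w ++ [x])) := by
        simpa using circularEquiv_append_comm [x] (u ++ w)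
      CircularEquiv Γ _ (v ++ (w ++ [x])) := ih hnd'
      CircularEquiv Γ _ (x :: v ++ w) := by
        simpa using circularEquiv_append_comm (v ++ w) [x]
  | swap x y u =>
    simp only [List.cons_append, List.nodup_cons, List.mem_cons, not_or] at hnd
    exact circularEquiv_swap hΓ hnd.1.2 hnd.2.1
  | trans huv _ ih₁ ih₂ => exact (ih₁ hnd).trans (ih₂ ((huv.append_right w).nodup_iff.1 hnd))

theorem circularEquiv_of_perm (hΓ : Γ.IsAcyclic) {u v : List V} (huv : u.Perm v) (hnd : u.Nodup) :
    CircularEquiv Γ u v := by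
  simpa using circularEquiv_append_right_of_perm hΓ huv (w := []) (by simpa using hnd)

end Words

section Arrangements

variable {V : Type*} {Γ : SimpleGraph V} {n : ℕ}

/-- The elementary moves between arrangements: two labels at cyclically consecutive positions are
interchanged, provided that they are not adjacent in `Γ`. -/
def ElementaryMove (Γ : SimpleGraph V) (a b : ZMod n ≃ V) : Prop :=
  ∃ p : ZMod n, ¬ Γ.Adj (a p) (a (p + 1)) ∧ b = (Equiv.swap p (p + 1)).trans a

/-- The arrangement obtained by rotating `c` by `r` places, `q ↦ c (q + r)`. -/
abbrev rotation (r : ZMod n) (c : ZMod n ≃ V) : ZMod n ≃ V :=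
  (Equiv.addRight r).trans c

/-- The word of labels read around the circle from position `0`. It is empty when `n = 0`, where
`ZMod n` is `ℤ`. -/
def word (c : ZMod n ≃ V) : List V :=
  List.ofFn fun i : Fin n => c (i : ℕ)

theorem word_injective [NeZero n] : Function.Injective (word : (ZMod n ≃ V) → List V) := by
  intro c d h
  ext i
  simpa using congrFun (List.ofFn_injective h) ⟨i.val, ZMod.val_lt i⟩

theorem nodup_word (c : ZMod n ≃ V) : (word c).Nodup :=
  List.nodup_ofFn.2 fun i j hij => Fin.ext <| by
    simpa [ZMod.val_cast_of_lt i.2, ZMod.val_cast_of_lt j.2] using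
      congrArg ZMod.val (c.injective hij)

theorem mem_word [NeZero n] (c : ZMod n ≃ V) (x : V) : x ∈ word c :=
  List.mem_ofFn.2 ⟨⟨(c.symm x).val, ZMod.val_lt _⟩, by simp⟩

theorem word_perm_word [NeZero n] (c d : ZMod n ≃ V) : (word c).Perm (word d) :=
  (List.perm_ext_iff_of_nodup (nodup_word c) (nodup_word d)).2 fun x =>
    iff_of_true (mem_word c x) (mem_word d x)

theorem word_rotation (k : ℕ) (c : ZMod n ≃ V) : word (rotation k c) = (word c).rotate k :=
  List.ext_getElem (by simp [word]) fun i _ _ => by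
    simp [word, List.getElem_rotate]

theorem word_of_two_le (h : 2 ≤ n) (c : ZMod n ≃ V) :
    word c = c 0 :: c 1 :: List.ofFn fun i : Fin (n - 2) => c ((i + 2 : ℕ) : ZMod n) := by
  obtain ⟨m, rfl⟩ := Nat.exists_eq_add_of_le' h
  simp [word, List.ofFn_succ, add_assoc, one_add_one_eq_two]

theorem word_swap_zero_one {x y : V} {w : List V} {c : ZMod n ≃ V} (h : word c = x :: y :: w) :
    c 0 = x ∧ c 1 = y ∧ word ((Equiv.swap 0 1).trans c) = y :: x :: w := by
  have hn : 2 ≤ n := by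
    have := congrArg List.length h
    simp only [word, List.length_ofFn, List.length_cons] at this
    omega
  rw [word_of_two_le hn] at h ⊢
  obtain ⟨rfl, htail⟩ := List.cons.inj h
  obtain ⟨rfl, rfl⟩ := List.cons.inj htail
  have fixed (i : Fin (n - 2)) :
      Equiv.swap (0 : ZMod n) 1 ((i + 2 : ℕ) : ZMod n) = ((i + 2 : ℕ) : ZMod n) := by
    have : Fact (1 < n) := ⟨hn⟩
    have hval : ((i + 2 : ℕ) : ZMod n).val = i + 2 := ZMod.val_cast_of_lt (by omega)
    refine Equiv.swap_apply_of_ne_of_ne (fun h0 => ?_) (fun h1 => ?_)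
    · simp [h0] at hval
    · simp [h1, ZMod.val_one] at hval
  refine ⟨rfl, rfl, ?_⟩
  simp only [Equiv.trans_apply, Equiv.swap_apply_left, Equiv.swap_apply_right, fixed]

theorem ElementaryMove.rotation {a b : ZMod n ≃ V} (h : ElementaryMove Γ a b) (r : ZMod n) :
    ElementaryMove Γ (rotation r a) (rotation r b) := by
  obtain ⟨p, hp, rfl⟩ := h
  refine ⟨p - r, by simpa [sub_add_eq_add_sub] using hp, ?_⟩
  ext q
  have := (Equiv.addRight r).injective.swap_apply (p - r) (p - r + 1) q
  simp_all [sub_add_eq_add_sub]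

theorem exists_word_eq_of_circularStep {c : ZMod n ≃ V} {w : List V}
    (h : CircularStep Γ (word c) w) :
    ∃ (d : ZMod n ≃ V) (r : ZMod n), word d = w ∧
      ReflTransGen (ElementaryMove Γ) c (rotation r d) := by
  generalize hc : word c = u at h
  cases h with
  | swap hxy w =>
    obtain ⟨rfl, rfl, hd⟩ := word_swap_zero_one hc
    refine ⟨(Equiv.swap 0 1).trans c, 0, hd, .single ⟨0, by simpa using hxy, ?_⟩⟩
    ext q
    simp
  | rotate u v =>
    refine ⟨rotation (u.length : ℕ) c, -(u.length : ZMod n), ?_, ?_⟩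
    · rw [word_rotation, hc, List.rotate_append_length_eq]
    · convert ReflTransGen.refl
      ext q
      simp

theorem exists_word_eq_of_circularEquiv {c : ZMod n ≃ V} {w : List V}
    (h : CircularEquiv Γ (word c) w) :
    ∃ (d : ZMod n ≃ V) (r : ZMod n), word d = w ∧
      ReflTransGen (ElementaryMove Γ) c (rotation r d) := by
  induction h with
  | refl => exact ⟨c, 0, rfl, by convert ReflTransGen.refl; ext q; simp⟩
  | tail _ hstep ih =>
    obtain ⟨d, r, rfl, hcd⟩ := ih
    obtain ⟨e, s, rfl, hde⟩ := exists_word_eq_of_circularStep hstep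
    have rotated : ReflTransGen (ElementaryMove Γ) (rotation r d) (rotation r (rotation s e)) :=
      hde.lift (rotation r) fun _ _ hmove => hmove.rotation r
    refine ⟨e, r + s, rfl, hcd.trans ?_⟩
    convert rotated using 1
    ext q
    simp [add_assoc]

end Arrangements

end CircularArrangement

/-- Combinatorial lemma: arrangements of the vertices of a forest around a circle;
elementary moves swap cyclically consecutive labels that are not adjacent in the
forest; any arrangement can be carried to a rotation of any other arrangement by
finitely many elementary moves. -/
theorem stmt_1 {V : Type*} [Fintype V] [DecidableEq V] (Γ : SimpleGraph V)
    (hΓ : Γ.IsAcyclic) (hn : 1 ≤ Fintype.card V)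
    (c c' : ZMod (Fintype.card V) ≃ V) :
    ∃ r : ZMod (Fintype.card V),
      Relation.ReflTransGen
        (fun a b => ∃ p : ZMod (Fintype.card V),
          ¬ Γ.Adj (a p) (a (p + 1)) ∧ b = (Equiv.swap p (p + 1)).trans a)
        c ((Equiv.addRight r).trans c') := by
  have : NeZero (Fintype.card V) := ⟨Nat.one_le_iff_ne_zero.1 hn⟩
  obtain ⟨d, r, hd, hreach⟩ := CircularArrangement.exists_word_eq_of_circularEquiv <|
    CircularArrangement.circularEquiv_of_perm hΓ (CircularArrangement.word_perm_word c c')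
      (CircularArrangement.nodup_word c)
  obtain rfl := CircularArrangement.word_injective hd
  exact ⟨r, hreach⟩
end

section
/- Let V be a real vector space, ω : V × V → ℝ a bilinear form, and δ₁, …, δₙ ∈ V linearly independent vectors. For each i define the transvection Tᵢ : V → V by Tᵢ(x) = x + ω(x, δᵢ)·δᵢ, and let T = Tₙ ∘ Tₙ₋₁ ∘ ⋯ ∘ T₁. If x ∈ V satisfies T(x) = x, then ω(x, δᵢ) = 0 for every i = 1, …, n. -/
/-!
Compose the steps `y ↦ y + f i y • δ i`. Those after the first move a vector only within the span of
the remaining `δ i`. So if the composition fixes `x`, then the displacement `f a x • δ a` of the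
first step lies in that span; by linear independence `f a x = 0`, hence the first step fixes `x`,
and one recurses on the others.
-/

theorem foldl_add_sub_mem {S V ι : Type*} [AddCommGroup V] [SetLike S V] [AddSubmonoidClass S V]
    {p : S} {g : V → ι → V} {l : List ι} (hg : ∀ i ∈ l, ∀ y, g y i ∈ p) (x : V) :
    l.foldl (fun y i => y + g y i) x - x ∈ p := by
  refine List.foldlRecOn (motive := fun y => y - x ∈ p) l _ ?_ fun y hy i hi => ?_
  · rw [sub_self]
    exact zero_mem p
  · rw [add_sub_right_comm]
    exact add_mem hy (hg i hi y)

section Module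

variable {R V ι : Type*} [Ring R] [AddCommGroup V] [Module R V]

theorem foldl_add_smul_sub_mem_span (f : ι → V → R) (δ : ι → V) (l : List ι) (x : V) :
    l.foldl (fun y i => y + f i y • δ i) x - x ∈ Submodule.span R (δ '' {i | i ∈ l}) :=
  foldl_add_sub_mem
    (fun _ hi _ => Submodule.smul_mem _ _ (Submodule.subset_span (Set.mem_image_of_mem δ hi))) x

theorem stmt_4_general (f : ι → V → R) {δ : ι → V} {l : List ι} (hl : l.Nodup)
    (hδ : LinearIndepOn R δ {i | i ∈ l}) {x : V}
    (hx : l.foldl (fun y i => y + f i y • δ i) x = x) :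
    ∀ i ∈ l, f i x = 0 := by
  induction l with
  | nil => exact List.forall_mem_nil _
  | cons a l ih =>
    obtain ⟨ha, hl⟩ := List.nodup_cons.1 hl
    rw [List.foldl_cons] at hx
    have displacement_mem : f a x • δ a ∈ Submodule.span R (δ '' {i | i ∈ l}) := by
      have h := foldl_add_smul_sub_mem_span f δ l (x + f a x • δ a)
      rwa [hx, sub_add_cancel_left, Submodule.neg_mem_iff] at h
    have tail_subset : {i | i ∈ l} ⊆ {i | i ∈ a :: l} := fun _ => List.mem_cons_of_mem a
    have tail_subset_sdiff : {i | i ∈ l} ⊆ {i | i ∈ a :: l} \ {a} :=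
      Set.subset_sdiff_singleton tail_subset ha
    have head_eq_zero : f a x = 0 :=
      hδ.eq_zero_of_smul_mem_span List.mem_cons_self _
        (Submodule.span_mono (Set.image_mono tail_subset_sdiff) displacement_mem)
    rw [head_eq_zero, zero_smul, add_zero] at hx
    exact List.forall_mem_cons.2 ⟨head_eq_zero, ih hl (hδ.mono tail_subset) hx⟩

end Module

/-- If `δ₁, …, δₙ` are linearly independent and `T` is the composition of the
transvections `x ↦ x + ω(x, δᵢ) • δᵢ` (applied in the order `i = 1, …, n`), then
any fixed point `x` of `T` satisfies `ω(x, δᵢ) = 0` for every `i`. -/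
theorem stmt_4 {V : Type*} [AddCommGroup V] [Module ℝ V] {n : ℕ}
    (ω : V →ₗ[ℝ] V →ₗ[ℝ] ℝ) (δ : Fin n → V) (hδ : LinearIndependent ℝ δ)
    (x : V)
    (hx : (List.finRange n).foldl (fun y i => y + ω y (δ i) • δ i) x = x) :
    ∀ i : Fin n, ω x (δ i) = 0 := by
  intro i
  exact stmt_4_general (fun i y => ω y (δ i)) (List.nodup_finRange n) (hδ.linearIndepOn _) hx i
    (List.mem_finRange i)
end

section
/- For all integers k and l, the characteristic polynomial of the 4 × 4 integer matrix M = [[0, 0, −1, 1], [−k, −k, kl, −1], [1, 0, −l, 0], [1, 1, −l, 0]], i.e., det(ζ·I − M), equals ζ²(ζ+k)(ζ+l) + (ζ+k)(ζ+l) + (1−kl), which expanded is ζ⁴ + (k+l)ζ³ + (kl+1)ζ² + (k+l)ζ + 1. -/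
open Polynomial

/-
Adding multiples of the third row `(-1, 0, ζ + l, 0)` of `ζ·I - M` to the other rows clears the rest
of the first column. The `3 × 3` minor left over shows that the characteristic polynomial is
`(ζ² + kζ + 1)(ζ² + lζ + 1) - ζ²`, and both stated forms are expansions of it.
-/

section

variable {R : Type*} [CommRing R]

theorem det_eq_mul_det_submatrix_of_forall_ne_eq_zero {n : ℕ}
    (A : Matrix (Fin (n + 1)) (Fin (n + 1)) R) (i j : Fin (n + 1)) (hA : ∀ i' ≠ i, A i' j = 0) :
    A.det = (-1) ^ (i + j : ℕ) * A i j * (A.submatrix i.succAbove j.succAbove).det := by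
  rw [Matrix.det_succ_column A j]
  exact Fintype.sum_eq_single i fun i' hi' ↦ by rw [hA i' hi', mul_zero, zero_mul]

/-- The homology action `M` of the composition of Dehn twists in the genus-2 example, in the basis
`[α₁], [β₁], [α₂], [β₂]`, with the parameters `k` and `l` taken in any commutative ring. -/
def dehnTwistMatrix (k l : R) : Matrix (Fin 4) (Fin 4) R :=
  !![0, 0, -1, 1; -k, -k, k*l, -1; 1, 0, -l, 0; 1, 1, -l, 0]

theorem map_dehnTwistMatrix {S : Type*} [CommRing S] (f : R →+* S) (k l : R) :
    f.mapMatrix (dehnTwistMatrix k l) = dehnTwistMatrix (f k) (f l) := by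
  ext i j
  fin_cases i <;> fin_cases j <;> simp [dehnTwistMatrix]

theorem det_scalar_sub_dehnTwistMatrix (x k l : R) :
    (Matrix.scalar (Fin 4) x - dehnTwistMatrix k l).det =
      (x ^ 2 + k * x + 1) * (x ^ 2 + l * x + 1) - x ^ 2 := by
  let cleared : Matrix (Fin 4) (Fin 4) R :=
    !![0, 0, x ^ 2 + l * x + 1, -1; 0, x + k, k * x, 1; -1, 0, x + l, 0; 0, -1, -x, x]
  let minor : Matrix (Fin 3) (Fin 3) R := !![0, x ^ 2 + l * x + 1, -1; x + k, k * x, 1; -1, -x, x]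
  have column_eq_zero : ∀ i ≠ 2, cleared i 0 = 0 := by
    intro i hi
    fin_cases i <;> first | rfl | exact absurd rfl hi
  have submatrix_eq : cleared.submatrix (Fin.succAbove 2) (Fin.succAbove 0) = minor := by
    ext i j
    fin_cases i <;> fin_cases j <;> rfl
  calc
    _ = cleared.det := by
      refine Matrix.det_eq_of_forall_row_eq_smul_add_const ![-x, -k, 0, 1] 2 rfl fun i j ↦ ?_
      fin_cases i <;> fin_cases j <;> simp [dehnTwistMatrix, cleared] <;> ring
    _ = -minor.det := by
      rw [det_eq_mul_det_submatrix_of_forall_ne_eq_zero cleared 2 0 column_eq_zero, submatrix_eq]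
      simp [cleared]
    _ = (x ^ 2 + k * x + 1) * (x ^ 2 + l * x + 1) - x ^ 2 := by
      simp only [minor, Matrix.det_fin_three, Matrix.of_apply, Matrix.cons_val]
      ring

theorem charpoly_dehnTwistMatrix (k l : R) :
    (dehnTwistMatrix k l).charpoly =
      (X ^ 2 + C k * X + 1) * (X ^ 2 + C l * X + 1) - X ^ 2 := by
  rw [Matrix.charpoly, Matrix.charmatrix, map_dehnTwistMatrix, det_scalar_sub_dehnTwistMatrix]

theorem stmt_6_general (k l : R) :
    (dehnTwistMatrix k l).charpoly =
      X ^ 2 * (X + C k) * (X + C l) + (X + C k) * (X + C l) + C (1 - k * l) ∧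
    (dehnTwistMatrix k l).charpoly =
      X ^ 4 + C (k + l) * X ^ 3 + C (k * l + 1) * X ^ 2 + C (k + l) * X + 1 := by
  rw [charpoly_dehnTwistMatrix]
  simp only [map_add, map_sub, map_mul, map_one]
  constructor <;> ring

end

/-- The characteristic polynomial of the homology action of the composition of
Dehn twists in the paper's genus-2 example equals
`ζ²(ζ+k)(ζ+l) + (ζ+k)(ζ+l) + (1−kl) = ζ⁴ + (k+l)ζ³ + (kl+1)ζ² + (k+l)ζ + 1`. -/
theorem stmt_6 (k l : ℤ) :
    (Matrix.charpoly (!![0, 0, -1, 1; -k, -k, k*l, -1; 1, 0, -l, 0; 1, 1, -l, 0] :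
        Matrix (Fin 4) (Fin 4) ℤ)) =
      X^2 * (X + C k) * (X + C l) + (X + C k) * (X + C l) + C (1 - k*l) ∧
    (Matrix.charpoly (!![0, 0, -1, 1; -k, -k, k*l, -1; 1, 0, -l, 0; 1, 1, -l, 0] :
        Matrix (Fin 4) (Fin 4) ℤ)) =
      X^4 + C (k + l) * X^3 + C (k*l + 1) * X^2 + C (k + l) * X + 1 :=
  stmt_6_general k l
end

section
/- For all integers k > 4 and l > 4, the polynomial P(ζ) = ζ⁴ + (k+l)ζ³ + (kl+1)ζ² + (k+l)ζ + 1 has no complex root which is a root of unity; that is, there is no complex number η and positive integer m with η^m = 1 and P(η) = 0. -/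
/-!
The quartic is palindromic: dividing by `η²` turns it into `(t + k)(t + l) - 1` with `t = η + η⁻¹`.
On the unit circle `t = 2 Re η` is real and at least `-2`, so `(t + k)(t + l) ≥ (k - 2)(l - 2)`,
which exceeds `1`.
-/

theorem palindromic_quartic_eq_of_mul_eq_one {R : Type*} [CommRing R] {x y : R} (hxy : x * y = 1)
    (a b : R) :
    x ^ 4 + (a + b) * x ^ 3 + (a * b + 1) * x ^ 2 + (a + b) * x + 1 =
      x ^ 2 * ((x + y + a) * (x + y + b) - 1) := by
  have hsum : x * (x + y) = x ^ 2 + 1 := by rw [mul_add, hxy, sq]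
  calc x ^ 4 + (a + b) * x ^ 3 + (a * b + 1) * x ^ 2 + (a + b) * x + 1
      = (x ^ 2 + 1 + x * a) * (x ^ 2 + 1 + x * b) - x ^ 2 := by ring
    _ = x ^ 2 * ((x + y + a) * (x + y + b) - 1) := by rw [← hsum]; ring

theorem palindromic_quartic_eq_zero_iff_of_norm_eq_one {η : ℂ} (hη : ‖η‖ = 1) (k l : ℝ) :
    η ^ 4 + ((k : ℂ) + l) * η ^ 3 + ((k : ℂ) * l + 1) * η ^ 2 + ((k : ℂ) + l) * η + 1 = 0 ↔
      (2 * η.re + k) * (2 * η.re + l) = 1 := by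
  have hη₀ : η ≠ 0 := norm_ne_zero_iff.mp (by simp [hη])
  have hconj : η * starRingEnd ℂ η = 1 := by simp [Complex.mul_conj', hη]
  rw [palindromic_quartic_eq_of_mul_eq_one hconj, Complex.add_conj,
    mul_eq_zero_iff_left (pow_ne_zero 2 hη₀), sub_eq_zero]
  norm_cast

theorem stmt_7_general {k l : ℝ} (hk : 2 < k) (hkl : 1 < (k - 2) * (l - 2)) {η : ℂ}
    (hη : ‖η‖ = 1) :
    η ^ 4 + ((k : ℂ) + l) * η ^ 3 + ((k : ℂ) * l + 1) * η ^ 2 + ((k : ℂ) + l) * η + 1 ≠ 0 := by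
  rw [ne_eq, palindromic_quartic_eq_zero_iff_of_norm_eq_one hη]
  have hl : 0 < l - 2 := pos_of_mul_pos_right (one_pos.trans hkl) (sub_pos.mpr hk).le
  have hre : -1 ≤ η.re := (abs_le.mp (hη ▸ Complex.abs_re_le_norm η)).1
  have hmono : (k - 2) * (l - 2) ≤ (2 * η.re + k) * (2 * η.re + l) :=
    mul_le_mul (by linarith) (by linarith) hl.le (by linarith)
  exact (hkl.trans_le hmono).ne'

/-- For integers `k, l > 4` the polynomial
`ζ⁴ + (k+l)ζ³ + (kl+1)ζ² + (k+l)ζ + 1` has no root of unity as a root. -/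
theorem stmt_7 (k l : ℤ) (hk : 4 < k) (hl : 4 < l) :
    ¬ ∃ η : ℂ, (∃ m : ℕ, 0 < m ∧ η ^ m = 1) ∧
      η^4 + ((k : ℂ) + l) * η^3 + ((k : ℂ) * l + 1) * η^2 + ((k : ℂ) + l) * η + 1 = 0 := by
  rintro ⟨η, ⟨m, hm, hpow⟩, hroot⟩
  have hkl : 1 < (k - 2) * (l - 2) := by nlinarith
  exact stmt_7_general (k := k) (l := l) (by norm_cast; lia) (mod_cast hkl)
    (Complex.norm_eq_one_of_pow_eq_one hpow hm.ne') (mod_cast hroot)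
end

section
/- Let k and l be odd integers with k + l ≡ 0 (mod 4) (equivalently, k ≢ l (mod 4)). Then the polynomial P(X) = X⁴ + (k+l)X³ + (kl+1)X² + (k+l)X + 1 is irreducible over ℚ. -/
open Polynomial

/-!
Modulo 2 the polynomial `P` is `X⁴ + 1 = (X - 1)⁴`, and `P(1) = kl + 2(k + l) + 3` is congruent to
`2` modulo `4` because `kl ≡ -k² ≡ -1`. So `P` satisfies Eisenstein's criterion at `2` around
`X = 1`, and Gauss's lemma passes from `ℤ` to `ℚ`.
-/

section Eisenstein

variable {R : Type*} [CommRing R] [IsDomain R]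

theorem irreducible_of_map_mk_eq_C_mul_X_sub_C_pow {I : Ideal R} [I.IsPrime] {f : R[X]} {r : R}
    {n : ℕ} (hprim : f.IsPrimitive) (hdeg : 0 < f.natDegree) (hlead : f.leadingCoeff ∉ I)
    (hmap : f.map (Ideal.Quotient.mk I) =
      C (Ideal.Quotient.mk I f.leadingCoeff) * (X - C (Ideal.Quotient.mk I r)) ^ n)
    (heval : f.eval r ∉ I ^ 2) : Irreducible f := by
  let κ := I.ResidueField
  have hmap_residue : f.map (algebraMap R κ) =
      C (algebraMap R κ f.leadingCoeff) * (X - C r).map (algebraMap R κ) ^ n := by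
    simpa [Polynomial.map_map, ← Ideal.Quotient.algebraMap_eq, ← IsScalarTower.algebraMap_eq,
      ← IsScalarTower.algebraMap_apply] using congrArg (map (algebraMap (R ⧸ I) κ)) hmap
  refine generalizedEisenstein (K := κ) ?_ (monic_X_sub_C r) hprim hdeg ?_ hmap_residue ?_
  · simpa using irreducible_X_sub_C (algebraMap R κ r)
  · simpa [κ] using hlead
  · simpa [κ, modByMonic_X_sub_C_eq_C_eval, Ideal.Quotient.eq_zero_iff_mem] using heval

theorem irreducible_X_sub_C_pow_add_C_mul {p r : R} {n : ℕ} {g : R[X]} (hp : Prime p)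
    (hn : n ≠ 0) (hdeg : g.degree < n) (heval : ¬ p ∣ g.eval r) :
    Irreducible ((X - C r) ^ n + C p * g) := by
  have : (Ideal.span {p}).IsPrime := (Ideal.span_singleton_prime hp.ne_zero).2 hp
  have hlt : (C p * g).degree < ((X - C r) ^ n).degree := by
    simpa [degree_pow, degree_C hp.ne_zero] using hdeg
  have hmonic : ((X - C r) ^ n + C p * g).Monic := ((monic_X_sub_C r).pow n).add_of_left hlt
  have hnatDegree : ((X - C r) ^ n + C p * g).natDegree = n := by
    simp [natDegree_add_eq_left_of_degree_lt hlt]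
  have hp_mk : Ideal.Quotient.mk (Ideal.span {p}) p = 0 := by simp
  refine irreducible_of_map_mk_eq_C_mul_X_sub_C_pow (I := Ideal.span {p}) (r := r) (n := n)
    hmonic.isPrimitive (by omega) ?_ ?_ ?_
  · rw [hmonic.leadingCoeff, Ideal.mem_span_singleton]
    exact hp.not_dvd_one
  · simp [hmonic.leadingCoeff, hp_mk]
  · rw [Ideal.span_singleton_pow, Ideal.mem_span_singleton, pow_two]
    simpa [hn, mul_dvd_mul_iff_left hp.ne_zero] using heval

theorem irreducible_quartic_of_not_four_dvd {a b c d : R} (h2 : Prime (2 : R)) (ha : Even a)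
    (hb : Even b) (hc : Even c) (hd : Odd d) (h4 : ¬ 4 ∣ 1 + a + b + c + d) :
    Irreducible (X ^ 4 + C a * X ^ 3 + C b * X ^ 2 + C c * X + C d) := by
  obtain ⟨a, rfl⟩ := ha
  obtain ⟨b, rfl⟩ := hb
  obtain ⟨c, rfl⟩ := hc
  obtain ⟨d, rfl⟩ := hd
  let g : R[X] := C (a + 2) * X ^ 3 + C (b - 3) * X ^ 2 + C (c + 2) * X + C d
  have hexpand : X ^ 4 + C (a + a) * X ^ 3 + C (b + b) * X ^ 2 + C (c + c) * X + C (2 * d + 1) =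
      (X - C 1) ^ 4 + C 2 * g := by
    simp only [g, map_add, map_sub, map_mul, map_one, map_ofNat]
    ring
  have heval : ¬ 2 ∣ g.eval 1 := by
    rintro ⟨e, he⟩
    refine h4 ⟨e, ?_⟩
    simp only [g, eval_add, eval_mul, eval_pow, eval_C, eval_X] at he
    linear_combination 2 * he
  rw [hexpand]
  exact irreducible_X_sub_C_pow_add_C_mul h2 four_ne_zero degree_cubic_lt heval

end Eisenstein

theorem four_dvd_mul_add_one {k l : ℤ} (hk : Odd k) (h4 : 4 ∣ k + l) : 4 ∣ k * l + 1 := by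
  have hsq : 4 ∣ k ^ 2 - 1 := Dvd.dvd.trans (by norm_num) (Int.eight_dvd_sq_sub_one_of_odd hk)
  have hmul : k * l + 1 = k * (k + l) - (k ^ 2 - 1) := by ring
  exact hmul ▸ (h4.mul_left k).sub hsq

/-- For odd integers `k, l` with `k + l ≡ 0 (mod 4)`, the polynomial
`X⁴ + (k+l)X³ + (kl+1)X² + (k+l)X + 1` is irreducible over `ℚ`. -/
theorem stmt_11 (k l : ℤ) (hk : Odd k) (hl : Odd l) (h4 : (4 : ℤ) ∣ (k + l)) :
    Irreducible
      (X^4 + C ((k : ℚ) + l) * X^3 + C ((k : ℚ) * l + 1) * X^2 +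
        C ((k : ℚ) + l) * X + 1 : ℚ[X]) := by
  have hmul : 4 ∣ k * l + 1 := four_dvd_mul_add_one hk h4
  have hirr : Irreducible
      (X ^ 4 + C (k + l) * X ^ 3 + C (k * l + 1) * X ^ 2 + C (k + l) * X + C 1) :=
    irreducible_quartic_of_not_four_dvd Int.prime_two (hk.add_odd hl) ((hk.mul hl).add_odd odd_one)
      (hk.add_odd hl) odd_one (by omega)
  rw [Monic.irreducible_iff_irreducible_map_fraction_map (K := ℚ) (by monicity!)] at hirr
  simpa using hirr
end
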